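/- arXiv:2103.15000 — 2 statements merged into one kernel-verified Lean document; each statement's English description precedes it below -/
import Mathlib

section
/- Let k ∈ C_{−1,0}(0,∞) and let f ∈ C¹_{−1}(0,∞), so that f is continuously differentiable on (0,∞), f and f′ extend continuously to 0, and f′ ∈ C_{−1}(0,∞). Then for every t > 0 the function t ↦ (k * f)(t) is differentiable and d/dt (k * f)(t) = (k * f′)(t) + f(0) k(t); consequently the Caputo-type general fractional derivative satisfies (∗D_{(k)} f)(t) = (k * f′)(t) for t > 0. -/
open Real MeasureTheory Set Filter Topology

/-- The Laplace convolution `(f * g)(t) = ∫₀ᵗ f(t-τ) g(τ) dτ`. -/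
noncomputable def lconv (f g : ℝ → ℝ) : ℝ → ℝ :=
  fun t => ∫ τ in (0:ℝ)..t, f (t - τ) * g τ

/-- The space `C_{-1}(0,∞)`: functions of the form `t^p f₁(t)` with `p > -1`
and `f₁` continuous on `[0,∞)`. -/
def Cm1 (f : ℝ → ℝ) : Prop :=
  ∃ p : ℝ, -1 < p ∧ ∃ f₁ : ℝ → ℝ, ContinuousOn f₁ (Set.Ici 0) ∧
    ∀ t : ℝ, 0 < t → f t = t ^ p * f₁ t

/-- The subspace `C_{-1,0}(0,∞)`: functions of the form `t^p f₁(t)` with `-1 < p < 0`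
and `f₁` continuous on `[0,∞)`. -/
def Cm10 (f : ℝ → ℝ) : Prop :=
  ∃ p : ℝ, -1 < p ∧ p < 0 ∧ ∃ f₁ : ℝ → ℝ, ContinuousOn f₁ (Set.Ici 0) ∧
    ∀ t : ℝ, 0 < t → f t = t ^ p * f₁ t

/-! Since `f = f(0) + ∫₀ f'`, Fubini's theorem gives `k * f = f(0) ∫₀ k + ∫₀ (k * f')`. Both
integrands are continuous on `(0,∞)`, so the fundamental theorem of calculus applies: for `k * f'`
this is because `C_{-1}` is closed under Laplace convolution, the substitution `τ = tθ` turning the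
singularities of the two factors into the fixed integrable weight `(1 - θ)^p θ^q`. -/

open scoped Convolution

theorem intervalIntegrable_one_sub_rpow_mul_rpow {p q : ℝ} (hp : -1 < p) (hq : -1 < q) :
    IntervalIntegrable (fun θ : ℝ => (1 - θ) ^ p * θ ^ q) volume 0 1 := by
  have hbeta := Complex.betaIntegral_convergent (u := (q + 1 : ℝ)) (v := (p + 1 : ℝ))
    (by simpa using by linarith) (by simpa using by linarith)
  refine hbeta.norm.congr fun θ hθ => ?_
  rw [uIoc_of_le zero_le_one] at hθ
  have h1θ : 0 ≤ 1 - θ := by linarith [hθ.2]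
  have hθ_cpow : (θ : ℂ) ^ (((q + 1 : ℝ) : ℂ) - 1) = (θ ^ q : ℝ) := by
    rw [Complex.ofReal_cpow hθ.1.le]; simp
  have h1θ_cpow : (1 - (θ : ℂ)) ^ (((p + 1 : ℝ) : ℂ) - 1) = ((1 - θ) ^ p : ℝ) := by
    rw [Complex.ofReal_cpow h1θ]; simp
  simp only [hθ_cpow, h1θ_cpow]
  rw [← Complex.ofReal_mul, Complex.norm_of_nonneg
    (mul_nonneg (rpow_nonneg hθ.1.le q) (rpow_nonneg h1θ p)), mul_comm]

theorem continuous_intervalIntegral_smul {X E : Type*} [TopologicalSpace X]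
    [FirstCountableTopology X] [WeaklyLocallyCompactSpace X] [NormedAddCommGroup E]
    [NormedSpace ℝ E] {μ : Measure ℝ} {a b : ℝ} {w : ℝ → ℝ} (hw : IntervalIntegrable w μ a b)
    {F : X → ℝ → E} (hF : Continuous (Function.uncurry F)) :
    Continuous fun x => ∫ θ in a..b, w θ • F x θ ∂μ := by
  refine continuous_iff_continuousAt.2 fun x₀ => ?_
  obtain ⟨K, hK, hKx₀⟩ := exists_compact_mem_nhds x₀
  obtain ⟨M, hM⟩ :=
    (hK.prod (isCompact_uIcc (a := a) (b := b))).exists_bound_of_continuousOn hF.continuousOn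
  refine intervalIntegral.continuousAt_of_dominated_interval (bound := fun θ => ‖w θ‖ * M)
    (.of_forall fun x => ?_) ?_ (hw.norm.mul_const M) (.of_forall fun θ _ => ?_)
  · exact hw.aestronglyMeasurable_restrict_uIoc.smul (hF.uncurry_left x).aestronglyMeasurable
  · filter_upwards [hKx₀] with x hx
    refine .of_forall fun θ hθ => ?_
    rw [norm_smul]
    exact mul_le_mul_of_nonneg_left (hM (x, θ) ⟨hx, uIoc_subset_uIcc hθ⟩) (norm_nonneg _)
  · exact ((hF.uncurry_right θ).const_smul (w θ)).continuousAt

theorem intervalIntegral_convolution {E E' F : Type*} [NormedAddCommGroup E]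
    [NormedAddCommGroup E'] [NormedAddCommGroup F] [NormedSpace ℝ E] [NormedSpace ℝ E']
    [NormedSpace ℝ F] [CompleteSpace E'] [CompleteSpace F] (L : E →L[ℝ] E' →L[ℝ] F)
    {φ : ℝ → E} {ψ : ℝ → E'} (hφ : Integrable φ) (hψ : Integrable ψ) (a b : ℝ) :
    ∫ u in a..b, (φ ⋆[L] ψ) u = ∫ s, L (φ s) (∫ v in (a - s)..(b - s), ψ v) := by
  have hint : Integrable (Function.uncurry fun u s => L (φ s) (ψ (u - s)))
      ((volume.restrict (uIoc a b)).prod volume) :=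
    (hφ.convolution_integrand L hψ).mono_measure
      (Measure.prod_mono Measure.restrict_le_self le_rfl)
  simp only [convolution]
  rw [intervalIntegral_integral_swap hint]
  congr 1 with s
  rw [(L (φ s)).intervalIntegral_comp_comm (hψ.comp_sub_right s).intervalIntegrable,
    intervalIntegral.integral_comp_sub_right]

theorem lconv_comm (f g : ℝ → ℝ) : lconv f g = lconv g f := by
  ext t
  simpa [lconv, mul_comm] using
    (intervalIntegral.integral_comp_sub_left (a := 0) (b := t) (fun τ => f τ * g (t - τ)) t)

theorem lconv_eq_convolution_indicator (f g : ℝ → ℝ) {u x : ℝ} (hu : 0 ≤ u) (hux : u ≤ x) :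
    lconv f g u =
      ((Ioc 0 x).indicator g ⋆[ContinuousLinearMap.mul ℝ ℝ] (Ioc 0 x).indicator f) u := by
  rw [lconv, intervalIntegral.integral_of_le hu, integral_Ioc_eq_integral_Ioo,
    ← integral_indicator measurableSet_Ioo, convolution]
  simp only [ContinuousLinearMap.mul_apply']
  congr 1 with s
  by_cases hs : s ∈ Ioo 0 u
  · have hus : u - s ∈ Ioc 0 x := ⟨by linarith [hs.2], by linarith [hs.1]⟩
    have hsx : s ∈ Ioc 0 x := ⟨hs.1, by linarith [hs.2]⟩
    rw [indicator_of_mem hs, indicator_of_mem hus, indicator_of_mem hsx, mul_comm]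
  · rw [indicator_of_notMem hs]
    by_cases h0 : 0 < s
    · have hus : u - s ∉ Ioc 0 x := fun h => hs ⟨h0, sub_pos.1 h.1⟩
      rw [indicator_of_notMem hus, mul_zero]
    · have hsx : s ∉ Ioc 0 x := fun h => h0 h.1
      rw [indicator_of_notMem hsx, zero_mul]

theorem lconv_integral_left {f g : ℝ → ℝ} {x : ℝ} (hx : 0 ≤ x)
    (hf : IntervalIntegrable f volume 0 x) (hg : IntervalIntegrable g volume 0 x) :
    lconv (fun s => ∫ v in (0:ℝ)..s, f v) g x = ∫ u in (0:ℝ)..x, lconv f g u := by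
  have integrable_trunc {h : ℝ → ℝ} (hh : IntervalIntegrable h volume 0 x) :
      Integrable ((Ioc 0 x).indicator h) :=
    (integrable_indicator_iff measurableSet_Ioc).2 hh.1
  have hprim {s : ℝ} (hs : s ∈ Ioc 0 x) :
      ∫ v in (0 - s)..(x - s), (Ioc 0 x).indicator f v = ∫ v in (0:ℝ)..(x - s), f v := by
    have hinter : Ioc (0 - s) (x - s) ∩ Ioc 0 x = Ioc 0 (x - s) := by
      rw [Ioc_inter_Ioc, sup_eq_right.2 (by linarith [hs.1]), inf_eq_left.2 (by linarith [hs.1])]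
    rw [intervalIntegral.integral_of_le (by linarith), setIntegral_indicator measurableSet_Ioc,
      hinter, intervalIntegral.integral_of_le (by linarith [hs.2])]
  calc lconv (fun s => ∫ v in (0:ℝ)..s, f v) g x
      = ∫ s, (Ioc 0 x).indicator g s * ∫ v in (0 - s)..(x - s), (Ioc 0 x).indicator f v := by
        rw [lconv, intervalIntegral.integral_of_le hx, ← integral_indicator measurableSet_Ioc]
        congr 1 with s
        by_cases hs : s ∈ Ioc 0 x
        · rw [indicator_of_mem hs, indicator_of_mem hs, hprim hs, mul_comm]
        · rw [indicator_of_notMem hs, indicator_of_notMem hs, zero_mul]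
    _ = ∫ u in (0:ℝ)..x,
          ((Ioc 0 x).indicator g ⋆[ContinuousLinearMap.mul ℝ ℝ] (Ioc 0 x).indicator f) u :=
        (intervalIntegral_convolution (.mul ℝ ℝ)
          (integrable_trunc hg) (integrable_trunc hf) 0 x).symm
    _ = ∫ u in (0:ℝ)..x, lconv f g u := by
        refine intervalIntegral.integral_congr fun u hu => ?_
        rw [uIcc_of_le hx] at hu
        exact (lconv_eq_convolution_indicator f g hu.1 hu.2).symm

theorem lconv_const_add_integral {k g : ℝ → ℝ} {x : ℝ} (hx : 0 ≤ x)
    (hk : IntervalIntegrable k volume 0 x) (hg : IntervalIntegrable g volume 0 x) (c : ℝ) :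
    lconv k (fun s => c + ∫ v in (0:ℝ)..s, g v) x =
      c * (∫ s in (0:ℝ)..x, k s) + ∫ u in (0:ℝ)..x, lconv k g u := by
  have hk_reflect : IntervalIntegrable (fun s => k (x - s)) volume 0 x := by
    simpa using (hk.comp_sub_left x).symm
  have hG : ContinuousOn (fun s => ∫ v in (0:ℝ)..s, g v) (uIcc 0 x) :=
    intervalIntegral.continuousOn_primitive_interval' hg left_mem_uIcc
  have hconst : ∫ s in (0:ℝ)..x, k (x - s) * c = c * ∫ s in (0:ℝ)..x, k s := by
    simp [mul_comm c]
  have hprim : ∫ s in (0:ℝ)..x, k (x - s) * ∫ v in (0:ℝ)..s, g v =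
      ∫ u in (0:ℝ)..x, lconv k g u := by
    rw [lconv_comm k g, ← lconv_integral_left hx hg hk, lconv_comm, lconv]
  simp only [lconv, mul_add]
  rw [intervalIntegral.integral_add (hk_reflect.mul_const c) (hk_reflect.mul_continuousOn hG),
    hconst, hprim]
  rfl

theorem lconv_eq_add_integral_of_hasDerivAt_of_tendsto {k f f' : ℝ → ℝ} {f0 x : ℝ} (hx : 0 ≤ x)
    (hk : IntervalIntegrable k volume 0 x) (hf' : IntervalIntegrable f' volume 0 x)
    (hf : ∀ s ∈ Ioo 0 x, HasDerivAt f (f' s) s) (hf0 : Tendsto f (𝓝[>] 0) (𝓝 f0)) :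
    lconv k f x = f0 * (∫ s in (0:ℝ)..x, k s) + ∫ u in (0:ℝ)..x, lconv k f' u := by
  have hftc : ∀ s ∈ Ioo 0 x, f s = f0 + ∫ v in (0:ℝ)..s, f' v := by
    intro s hs
    have hf's : IntervalIntegrable f' volume 0 s :=
      hf'.mono_set (uIcc_subset_uIcc_left (mem_uIcc_of_le hs.1.le hs.2.le))
    rw [intervalIntegral.integral_eq_sub_of_hasDerivAt_of_tendsto hs.1
      (fun v hv => hf v ⟨hv.1, hv.2.trans hs.2⟩) hf's hf0
      ((hf s hs).continuousAt.tendsto.mono_left nhdsWithin_le_nhds), add_sub_cancel]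
  rw [← lconv_const_add_integral hx hk hf']
  refine intervalIntegral.integral_congr_Ioo_of_le hx fun s hs => ?_
  simp only [hftc s hs]

namespace Cm1

variable {f g : ℝ → ℝ}

theorem exists_continuous (hf : Cm1 f) :
    ∃ p : ℝ, -1 < p ∧ ∃ f₁ : ℝ → ℝ, Continuous f₁ ∧ ∀ t : ℝ, 0 < t → f t = t ^ p * f₁ t := by
  obtain ⟨p, hp, f₁, hf₁, hf⟩ := hf
  refine ⟨p, hp, fun t => f₁ (max t 0),
    hf₁.comp_continuous (by fun_prop) fun t => le_max_right t 0, fun t ht => ?_⟩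
  simp only [max_eq_left ht.le, hf t ht]

theorem continuousOn (hf : Cm1 f) : ContinuousOn f (Ioi 0) := by
  obtain ⟨p, -, f₁, hf₁, hf⟩ := hf.exists_continuous
  have hrpow : ContinuousOn (fun t : ℝ => t ^ p) (Ioi 0) :=
    continuousOn_id.rpow_const fun t ht => .inl (ne_of_gt ht)
  exact (hrpow.mul hf₁.continuousOn).congr hf

theorem intervalIntegrable (hf : Cm1 f) {t : ℝ} (ht : 0 ≤ t) :
    IntervalIntegrable f volume 0 t := by
  obtain ⟨p, hp, f₁, hf₁, hf⟩ := hf.exists_continuous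
  refine ((intervalIntegral.intervalIntegrable_rpow' hp).mul_continuousOn
    hf₁.continuousOn).congr fun s hs => ?_
  rw [uIoc_of_le ht] at hs
  exact (hf s hs.1).symm

theorem hasDerivAt_integral (hf : Cm1 f) {t : ℝ} (ht : 0 < t) :
    HasDerivAt (fun x => ∫ s in (0:ℝ)..x, f s) (f t) t :=
  intervalIntegral.integral_hasDerivAt_right (hf.intervalIntegrable ht.le)
    (hf.continuousOn.stronglyMeasurableAtFilter isOpen_Ioi t ht)
    (hf.continuousOn.continuousAt (Ioi_mem_nhds ht))

protected theorem lconv (hf : Cm1 f) (hg : Cm1 g) : Cm1 (lconv f g) := by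
  obtain ⟨p, hp, f₁, hf₁, hf⟩ := hf.exists_continuous
  obtain ⟨q, hq, g₁, hg₁, hg⟩ := hg.exists_continuous
  have hcont : Continuous fun t : ℝ =>
      ∫ θ in (0:ℝ)..1, (1 - θ) ^ p * θ ^ q * (f₁ (t - t * θ) * g₁ (t * θ)) :=
    continuous_intervalIntegral_smul (intervalIntegrable_one_sub_rpow_mul_rpow hp hq)
      (F := fun t θ => f₁ (t - t * θ) * g₁ (t * θ)) (by fun_prop)
  refine ⟨p + q + 1, by linarith, _, hcont.continuousOn, fun t ht => ?_⟩
  have hrescale : lconv f g t = t * ∫ θ in (0:ℝ)..1, f (t - t * θ) * g (t * θ) := by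
    rw [intervalIntegral.mul_integral_comp_mul_left (f := fun τ => f (t - τ) * g τ), mul_zero,
      mul_one, lconv]
  have hfactor : ∀ θ ∈ Ioo (0:ℝ) 1, f (t - t * θ) * g (t * θ) =
      t ^ (p + q) * ((1 - θ) ^ p * θ ^ q * (f₁ (t - t * θ) * g₁ (t * θ))) := by
    intro θ hθ
    have h1θ : 0 < 1 - θ := by linarith [hθ.2]
    have htθ : t - t * θ = t * (1 - θ) := by ring
    rw [htθ, hf _ (mul_pos ht h1θ), hg _ (mul_pos ht hθ.1), mul_rpow ht.le h1θ.le,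
      mul_rpow ht.le hθ.1.le, rpow_add ht]
    ring
  rw [hrescale, intervalIntegral.integral_congr_Ioo_of_le zero_le_one hfactor,
    intervalIntegral.integral_const_mul, rpow_add_one ht.ne']
  ring

end Cm1

theorem Cm10.cm1 {f : ℝ → ℝ} (hf : Cm10 f) : Cm1 f :=
  let ⟨p, hp, _, hf⟩ := hf
  ⟨p, hp, hf⟩

theorem statement3_general {k f f' : ℝ → ℝ} (hk : Cm1 k)
    (hf : ∀ t : ℝ, 0 < t → HasDerivAt f (f' t) t) (hf' : Cm1 f') {f0 : ℝ}
    (hf0 : Tendsto f (𝓝[>] 0) (𝓝 f0)) {t : ℝ} (ht : 0 < t) :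
    HasDerivAt (lconv k f) (lconv k f' t + f0 * k t) t ∧
      deriv (lconv k f) t - f0 * k t = lconv k f' t := by
  have hderiv : HasDerivAt (lconv k f) (lconv k f' t + f0 * k t) t := by
    rw [add_comm]
    refine (((hk.hasDerivAt_integral ht).const_mul f0).add
      ((hk.lconv hf').hasDerivAt_integral ht)).congr_of_eventuallyEq ?_
    filter_upwards [Ioi_mem_nhds ht] with x hx
    have hx0 : 0 ≤ x := le_of_lt hx
    exact lconv_eq_add_integral_of_hasDerivAt_of_tendsto hx0 (hk.intervalIntegrable hx0)
      (hf'.intervalIntegrable hx0) (fun s hs => hf s hs.1) hf0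
  exact ⟨hderiv, by rw [hderiv.deriv, add_sub_cancel_right]⟩

/-- For `k ∈ C_{-1,0}(0,∞)` and `f ∈ C¹_{-1}(0,∞)` (i.e. `f` continuously
differentiable on `(0,∞)`, `f` and `f'` extending continuously to `0`, `f' ∈ C_{-1}`),
the Riemann-Liouville GFD satisfies `d/dt (k*f)(t) = (k*f')(t) + f(0) k(t)`, and hence the
Caputo GFD satisfies `(∗D_{(k)} f)(t) = (k * f')(t)` for `t > 0`. -/
theorem statement3 (k f f' : ℝ → ℝ) (hk : Cm10 k)
    (hf : ∀ t : ℝ, 0 < t → HasDerivAt f (f' t) t)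
    (hf'cont : ContinuousOn f' (Set.Ioi 0))
    (hf'Cm1 : Cm1 f')
    (f0 f'0 : ℝ)
    (hf0 : Filter.Tendsto f (nhdsWithin 0 (Set.Ioi 0)) (nhds f0))
    (hf'0 : Filter.Tendsto f' (nhdsWithin 0 (Set.Ioi 0)) (nhds f'0)) :
    ∀ t : ℝ, 0 < t →
      HasDerivAt (lconv k f) (lconv k f' t + f0 * k t) t ∧
      deriv (lconv k f) t - f0 * k t = lconv k f' t :=
  fun _ ht => statement3_general hk.cm1 hf hf'Cm1 hf0 ht
end

section
/- Second Fundamental Theorem for the GFD (Riemann–Liouville case): Let (κ, k) be a pair of Sonine kernels from S_{−1}. Then for every f ∈ C¹_{−1}(0,∞) and every t > 0, (I_{(κ)} D_{(k)} f)(t) = f(t). -/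
open Real MeasureTheory Set Filter Topology

/-! Write `1` for the constant function, so that `1 * g` is the primitive of `g` vanishing at `0`.
With `f = c + 1 * g` and `g = f'`, commutativity and associativity of the convolution give
`k * f = 1 * (c k + k * g)`, hence `(k * f)' = c k + k * g` almost everywhere, and
`κ * (k * f)' = c (κ * k) + (κ * k) * g = c + 1 * g = f`.

For merely locally integrable functions these identities would hold only almost everywhere. They
hold at every point for functions that are also locally bounded on `(0, ∞)`: in `F (t - τ) G τ` the
first factor is bounded for `τ ≤ t / 2` and the second one for `τ ≥ t / 2`. -/

/-- The class of real functions that are Lebesgue integrable on every `(0, T]` and bounded on every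
compact subinterval of `(0, ∞)`. On it the Laplace convolution is defined at every point, not merely
almost everywhere. Values on `(-∞, 0]` are irrelevant. -/
structure IntegrableLocBdd (F : ℝ → ℝ) : Prop where
  intervalIntegrable : ∀ ⦃T : ℝ⦄, 0 < T → IntervalIntegrable F volume 0 T
  exists_bound : ∀ ⦃a : ℝ⦄, 0 < a → ∀ b : ℝ, ∃ C : ℝ, ∀ x ∈ Icc a b, |F x| ≤ C

namespace IntegrableLocBdd

variable {F G : ℝ → ℝ}

lemma const (c : ℝ) : IntegrableLocBdd fun _ => c where
  intervalIntegrable _ _ := intervalIntegrable_const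
  exists_bound _ _ _ := ⟨|c|, fun _ _ => le_rfl⟩

protected lemma abs (hF : IntegrableLocBdd F) : IntegrableLocBdd fun x => |F x| where
  intervalIntegrable _ hT := (hF.intervalIntegrable hT).abs
  exists_bound _ ha b := by simpa only [abs_abs] using hF.exists_bound ha b

lemma const_mul (hF : IntegrableLocBdd F) (c : ℝ) : IntegrableLocBdd fun x => c * F x where
  intervalIntegrable _ hT := (hF.intervalIntegrable hT).const_mul c
  exists_bound a ha b := by
    obtain ⟨C, hC⟩ := hF.exists_bound ha b
    refine ⟨|c| * C, fun x hx => ?_⟩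
    rw [abs_mul]
    gcongr
    exact hC x hx

protected lemma add (hF : IntegrableLocBdd F) (hG : IntegrableLocBdd G) :
    IntegrableLocBdd fun x => F x + G x where
  intervalIntegrable _ hT := (hF.intervalIntegrable hT).add (hG.intervalIntegrable hT)
  exists_bound a ha b := by
    obtain ⟨C, hC⟩ := hF.exists_bound ha b
    obtain ⟨D, hD⟩ := hG.exists_bound ha b
    exact ⟨C + D, fun x hx => (abs_add_le _ _).trans (add_le_add (hC x hx) (hD x hx))⟩

lemma aestronglyMeasurable (hF : IntegrableLocBdd F) :
    AEStronglyMeasurable F (volume.restrict (Ioi 0)) := by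
  have hcover : Ioi (0 : ℝ) = ⋃ n : ℕ, Ioc 0 ((n : ℝ) + 1) := by
    ext x
    simp only [mem_Ioi, mem_iUnion, mem_Ioc]
    exact ⟨fun hx => (exists_nat_ge x).imp fun n hn => ⟨hx, by linarith⟩, fun ⟨_, hx, _⟩ => hx⟩
  rw [hcover, aestronglyMeasurable_iUnion_iff]
  exact fun n => (hF.intervalIntegrable n.cast_add_one_pos).aestronglyMeasurable

lemma aestronglyMeasurable_indicator (hF : IntegrableLocBdd F) :
    AEStronglyMeasurable ((Ioi 0).indicator F) :=
  (aestronglyMeasurable_indicator_iff measurableSet_Ioi).mpr hF.aestronglyMeasurable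

end IntegrableLocBdd

lemma Cm1.integrableLocBdd {F : ℝ → ℝ} (hF : Cm1 F) : IntegrableLocBdd F := by
  obtain ⟨p, hp, f₁, hf₁, hF_eq⟩ := hF
  constructor
  · intro T hT
    have hmul : IntervalIntegrable (fun t => t ^ p * f₁ t) volume 0 T :=
      (intervalIntegral.intervalIntegrable_rpow' hp).mul_continuousOn
        (hf₁.mono (by rw [uIcc_of_le hT.le]; exact Icc_subset_Ici_self))
    refine hmul.congr fun t ht => ?_
    rw [uIoc_of_le hT.le] at ht
    exact (hF_eq t ht.1).symm
  · intro a ha b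
    have hpos : ∀ x ∈ Icc a b, 0 < x := fun x hx => ha.trans_le hx.1
    have hcont : ContinuousOn F (Icc a b) :=
      ((continuousOn_id.rpow_const fun x hx => Or.inl (hpos x hx).ne').mul
        (hf₁.mono fun x hx => (hpos x hx).le)).congr fun x hx => hF_eq x (hpos x hx)
    exact isCompact_Icc.exists_bound_of_continuousOn hcont

lemma Cm10.cm1_s8 {F : ℝ → ℝ} (hF : Cm10 F) : Cm1 F := by
  obtain ⟨p, hp, -, hF⟩ := hF
  exact ⟨p, hp, hF⟩

section Lconv

variable {F G H : ℝ → ℝ} {t : ℝ}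

lemma lconv_comm_s8 (F G : ℝ → ℝ) : lconv F G = lconv G F := by
  ext t
  have h := intervalIntegral.integral_comp_sub_left (a := 0) (b := t)
    (fun τ => F τ * G (t - τ)) t
  simp only [sub_sub_cancel, sub_self, sub_zero] at h
  rw [lconv, lconv, h]
  simp only [mul_comm]

lemma lconv_one_left (G : ℝ → ℝ) (t : ℝ) :
    lconv (fun _ => 1) G t = ∫ τ in (0 : ℝ)..t, G τ := by
  simp only [lconv, one_mul]

lemma lconv_const_mul (c : ℝ) (F G : ℝ → ℝ) (t : ℝ) :
    lconv F (fun s => c * G s) t = c * lconv F G t := by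
  simp only [lconv, mul_left_comm _ c, intervalIntegral.integral_const_mul]

lemma lconv_congr_ae_right (ht : 0 < t) (h : ∀ᵐ s, 0 < s → G s = H s) :
    lconv F G t = lconv F H t := by
  refine intervalIntegral.integral_congr_ae (h.mono fun s hs hs' => ?_)
  rw [uIoc_of_le ht.le] at hs'
  simp only [hs hs'.1]

lemma lconv_congr_left (ht : 0 < t) (h : ∀ s, 0 < s → F s = G s) :
    lconv F H t = lconv G H t := by
  rw [lconv_comm_s8 F, lconv_comm_s8 G]
  exact lconv_congr_ae_right ht (Eventually.of_forall h)

lemma indicator_lconv (F G : ℝ → ℝ) :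
    (Ioi 0).indicator (lconv F G) =
      convolution ((Ioi 0).indicator F) ((Ioi 0).indicator G) (ContinuousLinearMap.mul ℝ ℝ) := by
  rw [lconv_comm_s8, ← posConvolution_eq_convolution_indicator F G _ volume]
  simp only [posConvolution, ContinuousLinearMap.mul_apply', mul_comm (F _)]
  rfl

end Lconv

namespace IntegrableLocBdd

variable {F G : ℝ → ℝ} {t : ℝ}

lemma intervalIntegrable_comp_sub_mul_half (hF : IntegrableLocBdd F) (hG : IntegrableLocBdd G)
    (ht : 0 < t) : IntervalIntegrable (fun τ => F (t - τ) * G τ) volume 0 (t / 2) := by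
  have hFt : IntervalIntegrable (fun τ => F (t - τ)) volume 0 t := by
    simpa only [sub_zero, sub_self] using ((hF.intervalIntegrable ht).comp_sub_left t).symm
  obtain ⟨C, hC⟩ := hF.exists_bound (half_pos ht) t
  rw [intervalIntegrable_iff_integrableOn_Ioc_of_le (half_pos ht).le]
  refine Integrable.bdd_mul (c := C) (hG.intervalIntegrable (half_pos ht)).1 ?_ ?_
  · exact hFt.1.aestronglyMeasurable.mono_set (Ioc_subset_Ioc_right (half_le_self ht.le))
  · filter_upwards [ae_restrict_mem measurableSet_Ioc] with τ hτ
    exact hC _ ⟨by linarith [hτ.2], by linarith [hτ.1]⟩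

lemma intervalIntegrable_comp_sub_mul (hF : IntegrableLocBdd F) (hG : IntegrableLocBdd G)
    (ht : 0 < t) : IntervalIntegrable (fun τ => F (t - τ) * G τ) volume 0 t := by
  refine (hF.intervalIntegrable_comp_sub_mul_half hG ht).trans ?_
  simpa only [sub_zero, sub_half, sub_sub_cancel, mul_comm] using
    ((hG.intervalIntegrable_comp_sub_mul_half hF ht).comp_sub_left t).symm

lemma lconv_eq_add_half (hF : IntegrableLocBdd F) (hG : IntegrableLocBdd G) (ht : 0 < t) :
    lconv F G t =
      (∫ τ in (0 : ℝ)..t / 2, F (t - τ) * G τ) + ∫ τ in (0 : ℝ)..t / 2, G (t - τ) * F τ := by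
  have hreflect : ∫ τ in (0 : ℝ)..t / 2, G (t - τ) * F τ = ∫ τ in t / 2..t, F (t - τ) * G τ := by
    have h := intervalIntegral.integral_comp_sub_left (a := 0) (b := t / 2)
      (fun τ => F (t - τ) * G τ) t
    simpa only [sub_sub_cancel, sub_half, sub_zero, mul_comm] using h
  have hwhole := hF.intervalIntegrable_comp_sub_mul hG ht
  have hhalf := hF.intervalIntegrable_comp_sub_mul_half hG ht
  rw [hreflect, intervalIntegral.integral_add_adjacent_intervals hhalf (hhalf.symm.trans hwhole)]
  rfl

lemma exists_bound_integral_comp_sub_mul_half (hF : IntegrableLocBdd F)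
    (hG : IntegrableLocBdd G) {a : ℝ} (ha : 0 < a) (b : ℝ) :
    ∃ C, ∀ t ∈ Icc a b, |∫ τ in (0 : ℝ)..t / 2, F (t - τ) * G τ| ≤ C := by
  obtain ⟨C, hC⟩ := hF.exists_bound (half_pos ha) b
  refine ⟨∫ τ in (0 : ℝ)..b, C * |G τ|, fun t ht => ?_⟩
  have ht_pos : 0 < t := ha.trans_le ht.1
  have hb_pos : 0 < b := ht_pos.trans_le ht.2
  have hC_nonneg : 0 ≤ C := (abs_nonneg _).trans (hC t ⟨by linarith [ht.1], ht.2⟩)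
  have hmajorant : ∀ T, 0 < T → IntervalIntegrable (fun τ => C * |G τ|) volume 0 T :=
    fun T hT => (hG.abs.const_mul C).intervalIntegrable hT
  calc |∫ τ in (0 : ℝ)..t / 2, F (t - τ) * G τ| ≤ ∫ τ in (0 : ℝ)..t / 2, C * |G τ| := by
        rw [← Real.norm_eq_abs]
        refine intervalIntegral.norm_integral_le_of_norm_le (half_pos ht_pos).le
          (Eventually.of_forall fun τ hτ => ?_) (hmajorant _ (half_pos ht_pos))
        rw [norm_mul]
        gcongr
        exacts [hC _ ⟨by linarith [ht.1, hτ.2], by linarith [ht.2, hτ.1]⟩, le_rfl]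
    _ ≤ ∫ τ in (0 : ℝ)..b, C * |G τ| :=
        intervalIntegral.integral_mono_interval le_rfl (half_pos ht_pos).le
          (by linarith [ht.2]) (Eventually.of_forall fun τ => by positivity) (hmajorant b hb_pos)

lemma intervalIntegrable_lconv (hF : IntegrableLocBdd F) (hG : IntegrableLocBdd G) {T : ℝ}
    (hT : 0 < T) : IntervalIntegrable (lconv F G) volume 0 T := by
  have htrunc : ∀ {K : ℝ → ℝ}, IntegrableLocBdd K →
      IntegrableOn ((Iic T).indicator K) (Ioi 0) := fun hK => by
    rw [integrableOn_indicator_iff measurableSet_Iic, inter_comm, Ioi_inter_Iic]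
    exact (hK.intervalIntegrable hT).1
  have hconv := integrable_posConvolution (htrunc hG) (htrunc hF) (ContinuousLinearMap.mul ℝ ℝ)
  rw [intervalIntegrable_iff_integrableOn_Ioc_of_le hT.le]
  refine hconv.integrableOn.congr_fun (fun t ht => ?_) measurableSet_Ioc
  rw [posConvolution, indicator_of_mem (mem_Ioi.mpr ht.1)]
  refine intervalIntegral.integral_congr fun τ hτ => ?_
  rw [uIcc_of_le ht.1.le] at hτ
  have hτT : τ ∈ Iic T := hτ.2.trans ht.2
  have hsubT : t - τ ∈ Iic T := (sub_le_self t hτ.1).trans ht.2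
  simp only [ContinuousLinearMap.mul_apply', indicator_of_mem hτT, indicator_of_mem hsubT,
    mul_comm]

protected lemma lconv (hF : IntegrableLocBdd F) (hG : IntegrableLocBdd G) :
    IntegrableLocBdd (lconv F G) where
  intervalIntegrable _ hT := hF.intervalIntegrable_lconv hG hT
  exists_bound a ha b := by
    obtain ⟨C, hC⟩ := hF.exists_bound_integral_comp_sub_mul_half hG ha b
    obtain ⟨D, hD⟩ := hG.exists_bound_integral_comp_sub_mul_half hF ha b
    refine ⟨C + D, fun t ht => ?_⟩
    rw [hF.lconv_eq_add_half hG (ha.trans_le ht.1)]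
    exact (abs_add_le _ _).trans (add_le_add (hC t ht) (hD t ht))

lemma convolutionExistsAt_indicator (hF : IntegrableLocBdd F) (hG : IntegrableLocBdd G) (x : ℝ) :
    ConvolutionExistsAt ((Ioi 0).indicator F) ((Ioi 0).indicator G) x
      (ContinuousLinearMap.mul ℝ ℝ) volume := by
  have hsupp : (fun τ => (Ioi 0).indicator F τ * (Ioi 0).indicator G (x - τ)) =
      (Ioo 0 x).indicator fun τ => G (x - τ) * F τ := by
    ext τ
    by_cases h₀ : 0 < τ <;> by_cases hx : τ < x <;> simp [indicator, h₀, hx, mul_comm]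
  simp only [ConvolutionExistsAt, ContinuousLinearMap.mul_apply']
  rw [hsupp, integrable_indicator_iff measurableSet_Ioo]
  rcases le_or_gt x 0 with hx | hx
  · rw [Ioo_eq_empty hx.not_gt]
    exact integrableOn_empty
  · exact (hG.intervalIntegrable_comp_sub_mul hF hx).1.mono_set Ioo_subset_Ioc_self

end IntegrableLocBdd

section LconvAlgebra

variable {F G H : ℝ → ℝ} {t : ℝ}

lemma lconv_add (hF : IntegrableLocBdd F) (hG : IntegrableLocBdd G) (hH : IntegrableLocBdd H)
    (ht : 0 < t) : lconv F (fun s => G s + H s) t = lconv F G t + lconv F H t := by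
  simp only [lconv, mul_add]
  exact intervalIntegral.integral_add (hF.intervalIntegrable_comp_sub_mul hG ht)
    (hF.intervalIntegrable_comp_sub_mul hH ht)

lemma lconv_assoc (hF : IntegrableLocBdd F) (hG : IntegrableLocBdd G) (hH : IntegrableLocBdd H)
    (ht : 0 < t) : lconv (lconv F G) H t = lconv F (lconv G H) t := by
  have hconv : (Ioi 0).indicator (lconv (lconv F G) H) t =
      (Ioi 0).indicator (lconv F (lconv G H)) t := by
    simp only [indicator_lconv]
    refine convolution_assoc _ _ _ _ (fun x y z => mul_assoc x y z)
      hF.aestronglyMeasurable_indicator hG.aestronglyMeasurable_indicator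
      hH.aestronglyMeasurable_indicator
      (Eventually.of_forall (hF.convolutionExistsAt_indicator hG)) ?_ ?_
    all_goals simp only [norm_indicator_eq_indicator_norm, Real.norm_eq_abs, ← indicator_lconv]
    · exact Eventually.of_forall (hG.abs.convolutionExistsAt_indicator hH.abs)
    · exact hF.abs.convolutionExistsAt_indicator (hG.abs.lconv hH.abs) t
  simpa only [indicator_of_mem (mem_Ioi.mpr ht)] using hconv

end LconvAlgebra

lemma exists_eq_const_add_integral_deriv {f : ℝ → ℝ}
    (hf : ∀ t, 0 < t → DifferentiableAt ℝ f t)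
    (hf' : ∀ ⦃T : ℝ⦄, 0 < T → IntervalIntegrable (deriv f) volume 0 T) :
    ∃ c, ∀ t, 0 < t → f t = c + ∫ τ in (0 : ℝ)..t, deriv f τ := by
  refine ⟨f 1 - ∫ τ in (0 : ℝ)..1, deriv f τ, fun t ht => ?_⟩
  have hftc : ∫ τ in (1 : ℝ)..t, deriv f τ = f t - f 1 :=
    intervalIntegral.integral_eq_sub_of_hasDerivAt
      (fun x hx => (hf x ((lt_min one_pos ht).trans_le hx.1)).hasDerivAt)
      ((hf' one_pos).symm.trans (hf' ht))
  have hsub := intervalIntegral.integral_interval_sub_left (hf' ht) (hf' one_pos)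
  linarith

lemma ae_deriv_eq_of_eq_integral {F h : ℝ → ℝ}
    (hh : ∀ ⦃T : ℝ⦄, 0 < T → IntervalIntegrable h volume 0 T)
    (hF : ∀ t, 0 < t → F t = ∫ τ in (0 : ℝ)..t, h τ) :
    ∀ᵐ x, 0 < x → deriv F x = h x := by
  have hderiv : ∀ᵐ x, ∀ n : ℕ, x ∈ uIcc 0 ((n : ℝ) + 1) → ∀ c ∈ uIcc 0 ((n : ℝ) + 1),
      HasDerivAt (fun x => ∫ τ in c..x, h τ) (h x) x :=
    ae_all_iff.mpr fun n => (hh n.cast_add_one_pos).ae_hasDerivAt_integral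
  filter_upwards [hderiv] with x hx hx_pos
  obtain ⟨n, hn⟩ := exists_nat_ge x
  have hmem : x ∈ uIcc 0 ((n : ℝ) + 1) := mem_uIcc_of_le hx_pos.le (by linarith)
  refine ((hx n hmem 0 left_mem_uIcc).congr_of_eventuallyEq ?_).deriv
  filter_upwards [Ioi_mem_nhds hx_pos] with y hy using hF y hy

lemma lconv_const_add_integral_s8 {k f g : ℝ → ℝ} {c t : ℝ} (hk : IntegrableLocBdd k)
    (hg : IntegrableLocBdd g) (hf : ∀ s, 0 < s → f s = c + ∫ τ in (0 : ℝ)..s, g τ) (ht : 0 < t) :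
    lconv k f t = ∫ τ in (0 : ℝ)..t, (c * k τ + lconv k g τ) := by
  have hone : IntegrableLocBdd fun _ => 1 := .const 1
  calc lconv k f t = lconv k (fun s => c * 1 + lconv (fun _ => 1) g s) t :=
        lconv_congr_ae_right ht <| Eventually.of_forall fun s hs => by
          rw [hf s hs, lconv_one_left, mul_one]
    _ = c * lconv (fun _ => 1) k t + lconv (lconv (fun _ => 1) k) g t := by
        rw [lconv_add hk (hone.const_mul c) (hone.lconv hg) ht, lconv_const_mul,
          ← lconv_assoc hk hone hg ht, lconv_comm_s8 k]
    _ = lconv (fun _ => 1) (fun s => c * k s + lconv k g s) t := by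
        rw [lconv_add hone (hk.const_mul c) (hk.lconv hg) ht, lconv_const_mul,
          lconv_assoc hone hk hg ht]
    _ = ∫ τ in (0 : ℝ)..t, (c * k τ + lconv k g τ) := lconv_one_left _ t

theorem statement8_general {κ k f g : ℝ → ℝ} {c : ℝ} (hκ : IntegrableLocBdd κ)
    (hk : IntegrableLocBdd k) (hSonine : ∀ t, 0 < t → lconv κ k t = 1)
    (hg : IntegrableLocBdd g) (hf : ∀ t, 0 < t → f t = c + ∫ τ in (0 : ℝ)..t, g τ) :
    ∀ t, 0 < t → lconv κ (deriv (lconv k f)) t = f t := by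
  intro t ht
  have hkg := hk.lconv hg
  have hderiv : ∀ᵐ s, 0 < s → deriv (lconv k f) s = c * k s + lconv k g s :=
    ae_deriv_eq_of_eq_integral ((hk.const_mul c).add hkg).intervalIntegrable
      fun s hs => lconv_const_add_integral_s8 hk hg hf hs
  calc lconv κ (deriv (lconv k f)) t = lconv κ (fun s => c * k s + lconv k g s) t :=
        lconv_congr_ae_right ht hderiv
    _ = c * lconv κ k t + lconv (lconv κ k) g t := by
        rw [lconv_add hκ (hk.const_mul c) hkg ht, lconv_const_mul, lconv_assoc hκ hk hg ht]
    _ = c + ∫ τ in (0 : ℝ)..t, g τ := by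
        rw [hSonine t ht, lconv_congr_left ht hSonine, lconv_one_left, mul_one]
    _ = f t := (hf t ht).symm

/-- Second Fundamental Theorem for the GFD, Riemann-Liouville case:
for a Sonine pair `(κ, k)` from `S_{-1}` and `f ∈ C¹_{-1}(0,∞)`,
`(I_{(κ)} D_{(k)} f)(t) = f(t)` for all `t > 0`. -/
theorem statement8 (κ k : ℝ → ℝ) (hκ : Cm10 κ) (hk : Cm10 k)
    (hSonine : ∀ t : ℝ, 0 < t → lconv κ k t = 1)
    (f : ℝ → ℝ)
    (hf_diff : ∀ t : ℝ, 0 < t → DifferentiableAt ℝ f t)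
    (hf' : Cm1 (deriv f)) :
    ∀ t : ℝ, 0 < t → lconv κ (fun s => deriv (lconv k f) s) t = f t := by
  obtain ⟨c, hc⟩ :=
    exists_eq_const_add_integral_deriv hf_diff hf'.integrableLocBdd.intervalIntegrable
  exact statement8_general hκ.cm1_s8.integrableLocBdd hk.cm1_s8.integrableLocBdd hSonine
    hf'.integrableLocBdd hc
end
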